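/- A finite simple graph G with at least one edge satisfies mmw(G) ≤ k if and only if there exist a finite ternary tree T and nontrivial subtrees T_u of T for all vertices u ∈ V(G) such that (1) if uv ∈ E(G) then the subtrees T_u and T_v have at least one vertex of T in common, and (2) every edge of T belongs to at most k of the subtrees T_u. -/

import Mathlib

/-- `mm G A` is the maximum size (number of edges) of a matching in `G` all of whose
edges have one endpoint in `A` and the other endpoint in `V(G) \ A`. -/
noncomputable def mm {α : Type} [Fintype α] (G : SimpleGraph α) (A : Set α) : ℕ :=
  sSup {n : ℕ | ∃ M : G.Subgraph, M.IsMatching ∧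
    (∀ u v : α, M.Adj u v → (u ∈ A ↔ v ∉ A)) ∧ M.edgeSet.ncard = n}

/-- The maximum matching width `mmw G`: the minimum over all branch-decompositions
`(T, L)` over `V(G)` — `T` a finite ternary tree (all degrees 1 or 3) together with a
bijection `L` between `V(G)` and the leaves of `T` — of the maximum, over the edges of
`T`, of `mm G` applied to the part of the partition of `V(G)` induced by that edge
(the set of vertices of `G` whose leaves lie on one side of the deleted edge). -/
noncomputable def mmw {α : Type} [Fintype α] (G : SimpleGraph α) : ℕ :=
  sInf {k : ℕ | ∃ (V : Type) (_ : Fintype V) (T : SimpleGraph V), T.IsTree ∧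
    (∀ v : V, (T.neighborSet v).ncard = 1 ∨ (T.neighborSet v).ncard = 3) ∧
    ∃ L : α ≃ {v : V // (T.neighborSet v).ncard = 1},
      ∀ a b : V, T.Adj a b →
        mm G {x : α | (T.deleteEdges {s(a, b)}).Reachable (L x : V) a} ≤ k}


def IsCov {α : Type} (G : SimpleGraph α) (S : Set α) (C : Finset α) : Prop :=
  ∀ x y, G.Adj x y → x ∈ S → y ∉ S → x ∈ C ∨ y ∈ C

theorem IsCov.compl {α : Type} {G : SimpleGraph α} {S : Set α} {C : Finset α}
    (h : IsCov G S C) : IsCov G Sᶜ C := by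
  intro x y hxy hx hy
  simp only [Set.mem_compl_iff, not_not] at hx hy
  exact (h y x hxy.symm hy hx).symm

theorem mm_le_of_cov {α : Type} [Fintype α] {G : SimpleGraph α} {S : Set α} {C : Finset α}
    (h : IsCov G S C) : mm G S ≤ C.card := by
  classical
  apply csSup_le'
  rintro n ⟨M, hM, hc, rfl⟩
  have key : ∀ e, ∃ c, e ∈ M.edgeSet → c ∈ C ∧ c ∈ e := by
    intro e
    by_cases he : e ∈ M.edgeSet
    swap
    · exact ⟨e.out.1, fun h => absurd h he⟩
    suffices ∃ c ∈ C, c ∈ e from this.imp fun c hc _ => hc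
    induction e with | h u v =>
    have huv : M.Adj u v := he
    have h1 := hc u v huv
    by_cases hu : u ∈ S
    · rcases h u v huv.adj_sub hu (h1.1 hu) with h2 | h2
      · exact ⟨u, h2, by simp⟩
      · exact ⟨v, h2, by simp⟩
    · have hv : v ∈ S := by tauto
      rcases h v u huv.adj_sub.symm hv hu with h2 | h2
      · exact ⟨v, h2, by simp⟩
      · exact ⟨u, h2, by simp⟩
  choose g hgg using key
  have hg := fun e he => (hgg e he).1
  have hg' := fun e he => (hgg e he).2
  rw [← Set.ncard_coe_finset C]
  apply Set.ncard_le_ncard_of_injOn g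
  · intro e he; exact hg e he
  · intro e he e' he' hee
    have h1 := hg' e he
    have h2 := hg' e' he'
    rw [← hee] at h2
    generalize g e = c at h1 h2
    obtain ⟨d, rfl⟩ := Sym2.mem_iff_exists.1 h1
    obtain ⟨d', rfl⟩ := Sym2.mem_iff_exists.1 h2
    have := hM.eq_of_adj_left (show M.Adj c d from he) (show M.Adj c d' from he')
    rw [this]

theorem card_le_mm {α : Type} [Fintype α] {G : SimpleGraph α} {S : Set α} {C : Finset α}
    (h : IsCov G S C) (hmin : ∀ D, IsCov G S D → C.card ≤ D.card) : C.card ≤ mm G S := by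
  classical
  let r : C → α → Prop := fun c d => G.Adj c d ∧ ((c : α) ∈ S ↔ d ∉ S) ∧ d ∉ C
  have half : ∀ P : Set α, IsCov G P C → (∀ D, IsCov G P D → C.card ≤ D.card) →
      ∀ A : Finset α, A ⊆ C → (∀ a ∈ A, a ∈ P) →
      A.card ≤ (Finset.univ.filter (fun d => ∃ a ∈ A, G.Adj a d ∧ d ∉ P ∧ d ∉ C)).card := by
    intro P hP hPm A hA hAP
    set N := (Finset.univ.filter (fun d => ∃ a ∈ A, G.Adj a d ∧ d ∉ P ∧ d ∉ C))
    have hcov : IsCov G P ((C \ A) ∪ N) := by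
      intro x y hxy hx hy
      have hyA : y ∉ A := fun h => hy (hAP y h)
      by_cases hyC : y ∈ C
      · right; simp [hyC, hyA]
      · by_cases hxA : x ∈ A
        · right; simp only [Finset.mem_union, N, Finset.mem_filter]; right
          exact ⟨Finset.mem_univ _, x, hxA, hxy, hy, hyC⟩
        · left
          have := hP x y hxy hx hy
          simp [hxA]; tauto
    have h1 := hPm _ hcov
    have h2 := Finset.card_union_le (C \ A) N
    have h3 := Finset.card_sdiff_add_card_eq_card hA
    omega
  have hall : ∀ A : Finset C, A.card ≤ (Finset.univ.filter (fun b => ∃ a ∈ A, r a b)).card := by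
    intro A
    set B : Finset α := A.map (Function.Embedding.subtype _) with hB
    have hBC : B ⊆ C := by
      intro x hx
      simp only [hB, Finset.mem_map] at hx
      obtain ⟨a, _, rfl⟩ := hx
      exact a.2
    have hm : ∀ D, IsCov G Sᶜ D → C.card ≤ D.card := fun D hD => hmin D (by simpa using hD.compl)
    have h1 := half S h hmin (B.filter (· ∈ S)) (fun x hx => hBC (Finset.mem_filter.1 hx).1)
      (fun x hx => (Finset.mem_filter.1 hx).2)
    have h2 := half Sᶜ h.compl hm (B.filter (· ∉ S)) (fun x hx => hBC (Finset.mem_filter.1 hx).1)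
      (fun x hx => (Finset.mem_filter.1 hx).2)
    have h3 := Finset.card_filter_add_card_filter_not (s := B) (· ∈ S)
    have h4 : B.card = A.card := Finset.card_map _
    rw [← h4, ← h3]
    refine (add_le_add h1 h2).trans ?_
    rw [← Finset.card_union_of_disjoint]
    · apply Finset.card_le_card
      intro d
      simp only [Finset.mem_union, Finset.mem_filter, Finset.mem_univ, true_and, hB, Finset.mem_map, r]
      rintro (⟨a, ⟨⟨⟨c, hc, rfl⟩, hS⟩, h5, h6, h7⟩⟩ | ⟨a, ⟨⟨⟨c, hc, rfl⟩, hS⟩, h5, h6, h7⟩⟩)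
      · refine ⟨c, hc, h5, ?_, h7⟩
        simp only [Function.Embedding.subtype_apply] at hS
        tauto
      · refine ⟨c, hc, h5, ?_, h7⟩
        simp only [Function.Embedding.subtype_apply] at hS
        simp only [Set.mem_compl_iff] at h6
        tauto
    · rw [Finset.disjoint_left]
      intro d hd hd'
      simp only [Finset.mem_filter, Set.mem_compl_iff] at hd hd'
      obtain ⟨_, _, _, _, hd, _⟩ := hd
      obtain ⟨_, _, _, _, hd', _⟩ := hd'
      exact hd' hd
  obtain ⟨f, hf, hr⟩ := (Fintype.all_card_le_filter_rel_iff_exists_injective r).1 hall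
  let M : G.Subgraph := ⨆ c : C, G.subgraphOfAdj (hr c).1
  have hM : M.IsMatching := by
    apply SimpleGraph.Subgraph.IsMatching.iSup
    · intro c; exact SimpleGraph.Subgraph.IsMatching.subgraphOfAdj _
    · intro c c' hcc
      simp only [SimpleGraph.support_subgraphOfAdj]
      have h1 : f c ≠ f c' := fun h => hcc (hf h)
      have h2 : (c : α) ≠ c' := fun h => hcc (Subtype.ext h)
      have h3 : f c ≠ c' := fun h => (hr c).2.2 (h ▸ c'.2)
      have h4 : f c' ≠ c := fun h => (hr c').2.2 (h ▸ c.2)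
      simp [Set.disjoint_left, h1, h2, h3, h4.symm]
  have hE : M.edgeSet = Set.range (fun c : C => s((c : α), f c)) := by
    ext e; simp [M, SimpleGraph.Subgraph.edgeSet_iSup, eq_comm]
  have hinj : Function.Injective (fun c : C => s((c : α), f c)) := by
    intro c c' h
    simp only [Sym2.eq_iff] at h
    rcases h with h | h
    · exact Subtype.ext h.1
    · exact absurd (h.1 ▸ c.2) (hr c').2.2
  apply le_csSup
  · refine ⟨Fintype.card (Sym2 α), ?_⟩
    rintro n ⟨M, -, -, rfl⟩
    rw [← Nat.card_eq_fintype_card, ← Set.ncard_univ]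
    exact Set.ncard_le_ncard (Set.subset_univ _) (Set.toFinite _)
  · refine ⟨M, hM, ?_, ?_⟩
    · intro u v huv
      have : s(u, v) ∈ M.edgeSet := huv
      rw [hE] at this
      obtain ⟨c, hc⟩ := this
      have h1 := (hr c).2.1
      simp only [Sym2.eq_iff] at hc
      rcases hc with ⟨h2, h3⟩ | ⟨h2, h3⟩ <;> rw [h2, h3] at h1 <;> tauto
    · rw [hE, ← Set.image_univ, Set.ncard_image_of_injective _ hinj, Set.ncard_univ]
      simp

/-- uncrossing -/
theorem uncross {α : Type} {G : SimpleGraph α} {P P' : Set α} {C C' : Finset α}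
    (hPP : P' ⊆ P) (h : IsCov G P C) (hmin : ∀ D, IsCov G P D → C.card ≤ D.card)
    (h' : IsCov G P' C') (hmin' : ∀ D, IsCov G P' D → C'.card ≤ D.card)
    (hmax : ∀ D, IsCov G P' D → D.card ≤ C'.card →
      ((D : Set α) ∩ P').ncard ≤ ((C' : Set α) ∩ P').ncard) :
    (∀ u ∈ P', u ∈ C → u ∈ C') ∧ (∀ u, u ∉ P → u ∈ C' → u ∈ C) := by
  classical
  let D' : Finset α := (C ∪ C').filter (fun u => if u ∈ P' then True else
    if u ∈ P then u ∈ C' else u ∈ C ∧ u ∈ C')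
  let D : Finset α := (C ∪ C').filter (fun u => if u ∈ P' then u ∈ C ∧ u ∈ C' else
    if u ∈ P then u ∈ C else True)
  have hD' : IsCov G P' D' := by
    intro x y hxy hx hy
    have h1 := h' x y hxy hx hy
    have h2 := h x y hxy (hPP hx)
    simp only [D', Finset.mem_filter, Finset.mem_union, hx, hy, if_true, if_false]
    by_cases hyP : y ∈ P
    · simp only [hyP, if_true]; tauto
    · simp only [hyP, if_false]; tauto
  have hD : IsCov G P D := by
    intro x y hxy hx hy
    have hy' : y ∉ P' := fun h => hy (hPP h)
    have h1 := h' x y hxy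
    have h2 := h x y hxy hx hy
    simp only [D, Finset.mem_filter, Finset.mem_union, hx, hy, hy', if_true, if_false]
    by_cases hxP : x ∈ P'
    · simp only [hxP, if_true]; tauto
    · simp only [hxP, if_false]; tauto
  have hU : D ∪ D' = C ∪ C' := by
    ext u
    simp only [D, D', Finset.mem_filter, Finset.mem_union]
    split_ifs <;> tauto
  have hI : D ∩ D' = C ∩ C' := by
    ext u
    have := @hPP u
    simp only [D, D', Finset.mem_filter, Finset.mem_union, Finset.mem_inter]
    split_ifs <;> tauto
  have e1 := Finset.card_union_add_card_inter D D'
  have e2 := Finset.card_union_add_card_inter C C'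
  rw [hU, hI] at e1
  have m1 := hmin D hD
  have m2 := hmin' D' hD'
  have hcard : D'.card = C'.card := by omega
  have hmx := hmax D' hD' hcard.le
  have hsub : (C' : Set α) ∩ P' ⊆ (D' : Set α) ∩ P' := by
    rintro u ⟨hu, hu'⟩
    refine ⟨?_, hu'⟩
    simp only [D', Finset.coe_filter, Finset.mem_union, Set.mem_ofPred_eq, hu', if_true]
    exact ⟨Or.inr hu, trivial⟩
  have hEq := Set.eq_of_subset_of_ncard_le hsub hmx ((Finset.finite_toSet D').inter_of_left _)
  have hfirst : ∀ u ∈ P', u ∈ C → u ∈ C' := by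
    intro u hu huC
    have : u ∈ (D' : Set α) ∩ P' := by
      refine ⟨?_, hu⟩
      simp only [D', Finset.coe_filter, Finset.mem_union, Set.mem_ofPred_eq, hu, if_true]
      exact ⟨Or.inl huC, trivial⟩
    rw [← hEq] at this
    exact this.1
  have hsub2 : D' ⊆ C' := by
    intro u hu
    simp only [D', Finset.mem_filter, Finset.mem_union] at hu
    by_cases hu' : u ∈ P'
    · have := hfirst u hu'; tauto
    · simp only [hu', if_false] at hu
      split_ifs at hu <;> tauto
  have hEq2 := Finset.eq_of_subset_of_card_le hsub2 hcard.ge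
  refine ⟨hfirst, fun u hu huC => ?_⟩
  rw [← hEq2] at huC
  have hu' : u ∉ P' := fun h => hu (hPP h)
  simp only [D', Finset.mem_filter, hu, hu', if_false] at huC
  exact huC.2.1

theorem exists_best {α : Type} [Fintype α] (G : SimpleGraph α) (S : Set α) :
    ∃ C : Finset α, IsCov G S C ∧ (∀ D, IsCov G S D → C.card ≤ D.card) ∧
      (∀ D, IsCov G S D → D.card ≤ C.card →
      ((D : Set α) ∩ S).ncard ≤ ((C : Set α) ∩ S).ncard) := by
  classical
  have hne : (Finset.univ.filter (fun C => IsCov G S C)).Nonempty :=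
    ⟨Finset.univ, by rw [Finset.mem_filter]; simp [IsCov]⟩
  obtain ⟨C0, hC0, hC0m⟩ := Finset.exists_min_image _ Finset.card hne
  have hne2 : (Finset.univ.filter (fun C => IsCov G S C ∧ C.card ≤ C0.card)).Nonempty :=
    ⟨C0, by simpa using hC0⟩
  obtain ⟨C, hC, hCm⟩ := Finset.exists_max_image _
    (fun C : Finset α => ((C : Set α) ∩ S).ncard) hne2
  simp only [Finset.mem_filter, Finset.mem_univ, true_and] at hC0 hC0m hC hCm
  exact ⟨C, hC.1, fun D hD => hC.2.trans (hC0m D hD), fun D hD hDC => hCm D ⟨hD, hDC.trans hC.2⟩⟩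

theorem exists_covers {α : Type} [Fintype α] (G : SimpleGraph α) (x0 : α) :
    ∃ C : Set α → Finset α, (∀ S, IsCov G S (C S)) ∧ (∀ S, (C S).card ≤ mm G S) ∧
      (∀ S, C Sᶜ = C S) ∧ (∀ S R u, S ⊆ R → u ∈ S → u ∈ C R → u ∈ C S) := by
  classical
  choose B hB hBmin hBmax using exists_best G
  have hmin' : ∀ S D, IsCov G Sᶜ D → (B S).card ≤ D.card :=
    fun S D hD => hBmin S D (by simpa using hD.compl)
  refine ⟨fun S => if x0 ∈ S then B Sᶜ else B S, ?_, ?_, ?_, ?_⟩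
  · intro S
    dsimp only
    split_ifs
    · simpa using (hB Sᶜ).compl
    · exact hB S
  · intro S
    dsimp only
    split_ifs
    · apply card_le_mm
      · simpa using (hB Sᶜ).compl
      · intro D hD; exact hBmin _ D hD.compl
    · exact card_le_mm (hB S) (hBmin S)
  · intro S
    by_cases h : x0 ∈ S <;> simp [h]
  · intro S R u hSR hu huR
    dsimp only at huR ⊢
    by_cases h1 : x0 ∈ S
    · simp only [h1, hSR h1, if_true] at huR ⊢
      exact (uncross (Set.compl_subset_compl.2 hSR) (hB _) (hBmin _) (hB _) (hBmin _) (hBmax _)).2 u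
        (by simpa using hu) huR
    · by_cases h2 : x0 ∈ R
      · simp only [h1, h2, if_true, if_false] at huR ⊢
        exact (uncross hSR (by simpa using (hB Rᶜ).compl) (fun D hD => hBmin _ D hD.compl)
          (hB _) (hBmin _) (hBmax _)).1 u hu huR
      · simp only [h1, h2, if_false] at huR ⊢
        exact (uncross hSR (hB _) (hBmin _) (hB _) (hBmin _) (hBmax _)).1 u hu huR

theorem exists_covers' {α : Type} [Fintype α] (G : SimpleGraph α)
    (hcard : 3 ≤ Fintype.card α) :
    ∃ C : Set α → Finset α, (∀ S, IsCov G S (C S)) ∧ (∀ S, (C S).card ≤ max 1 (mm G S)) ∧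
      (∀ S, C Sᶜ = C S) ∧ (∀ u, u ∈ C {u}) ∧
      (∀ S R u, S ⊆ R → u ∈ S → u ∈ C R → u ∈ C S) := by
  classical
  have : Nonempty α := by rw [← Fintype.card_pos_iff]; omega
  obtain ⟨B, h1, h2, h3, h4⟩ := exists_covers G (Classical.arbitrary α)
  let p : Set α → α → Prop := fun S u => S = {u} ∨ S = {u}ᶜ
  have huniq : ∀ S u v, p S u → p S v → u = v := by
    have key : ∀ u v : α, ({u} : Set α) ≠ {v}ᶜ := by
      intro u v h
      have h5 : ∀ w, w = u ∨ w = v := by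
        intro w
        by_cases hw : w = v
        · exact Or.inr hw
        · left
          have : w ∈ ({v}ᶜ : Set α) := hw
          rw [← h] at this; exact this
      have : (Finset.univ : Finset α) ⊆ {u, v} := by
        intro w _; simpa using h5 w
      have h6 := Finset.card_le_card this
      have h7 := Finset.card_le_two (a := u) (b := v)
      rw [Finset.card_univ] at h6
      omega
    rintro S u v (rfl | rfl) (h | h)
    · simpa using h
    · exact absurd h (key _ _)
    · exact absurd h.symm (key _ _)
    · simpa using h
  have hpc : ∀ S u, p Sᶜ u ↔ p S u := by
    intro S u
    simp only [p, compl_inj_iff]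
    rw [compl_eq_comm, eq_comm (a := _ᶜ)]
    tauto
  refine ⟨fun S => if h : ∃ u, p S u then {h.choose} else B S, ?_, ?_, ?_, ?_, ?_⟩
  · intro S
    dsimp only
    split_ifs with h
    · have := h.choose_spec
      generalize h.choose = u at this
      intro x y hxy hx hy
      rcases this with rfl | rfl
      · left; simpa using hx
      · right; simpa using hy
    · exact h1 S
  · intro S
    dsimp only
    split_ifs with h
    · simp
    · exact (h2 S).trans (le_max_right _ _)
  · intro S
    have hpc' : p Sᶜ = p S := funext fun u => propext (hpc S u)
    simp only [hpc', h3]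
  · intro u
    have h : ∃ v, p {u} v := ⟨u, Or.inl rfl⟩
    simp only [h, dif_pos]
    have := huniq _ _ _ h.choose_spec (Or.inl rfl : p {u} u)
    simp [this]
  · intro S R u hSR huS huR
    dsimp only at huR ⊢
    have hR : R ≠ Set.univ := by
      rintro rfl
      have hpR : ¬ ∃ v, p Set.univ v := by
        rintro ⟨v, hv | hv⟩
        · have := congrArg Set.ncard hv
          rw [Set.ncard_univ, Set.ncard_singleton, Nat.card_eq_fintype_card] at this
          omega
        · have : v ∈ ({v}ᶜ : Set α) := hv ▸ Set.mem_univ v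
          exact this rfl
      simp only [hpR, dif_neg, not_false_eq_true] at huR
      have h5 : mm G Set.univ ≤ (∅ : Finset α).card :=
        mm_le_of_cov (fun x y _ _ h => absurd (Set.mem_univ y) h)
      have h6 := (h2 Set.univ).trans h5
      rw [Finset.card_empty, Nat.le_zero, Finset.card_eq_zero] at h6
      simp [h6] at huR
    by_cases hpS : ∃ v, p S v
    · simp only [hpS, dif_pos]
      have hv := hpS.choose_spec
      generalize hpS.choose = v at hv
      rcases hv with rfl | rfl
      · simpa using huS
      · exfalso
        have hRe : R = {v}ᶜ := by
          apply subset_antisymm _ hSR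
          intro w hw hwv
          apply hR
          rw [Set.eq_univ_iff_forall]
          intro z
          by_cases hz : z = v
          · rw [hz]; simp only [Set.mem_singleton_iff] at hwv; exact hwv ▸ hw
          · exact hSR hz
        have h : ∃ v, p R v := ⟨v, Or.inr hRe⟩
        simp only [h, dif_pos] at huR
        have := huniq _ _ _ h.choose_spec (Or.inr hRe : p R v)
        rw [this] at huR
        simp at huR
        exact huS (by simpa using huR)
    · simp only [hpS, dif_neg, not_false_eq_true]
      by_cases hpR : ∃ v, p R v
      · exfalso
        simp only [hpR, dif_pos] at huR
        have hv := hpR.choose_spec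
        generalize hpR.choose = v at hv huR
        simp only [Finset.mem_singleton] at huR
        subst huR
        rcases hv with rfl | rfl
        · apply hpS
          refine ⟨u, Or.inl (subset_antisymm hSR ?_)⟩
          simpa using huS
        · exact hSR huS rfl
      · simp only [hpR, dif_neg, not_false_eq_true] at huR
        exact h4 S R u hSR huS huR

theorem reach_or {V : Type} {T : SimpleGraph V} (hT : T.Connected) (v a b : V) :
    (T.deleteEdges {s(a, b)}).Reachable v a ∨ (T.deleteEdges {s(a, b)}).Reachable v b := by
  obtain ⟨p⟩ := hT.preconnected v a
  induction p with
  | nil => left; rfl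
  | @cons v w a h p ih =>
    by_cases he : s(v, w) = s(a, b)
    · rw [Sym2.eq_iff] at he
      rcases he with ⟨rfl, rfl⟩ | ⟨rfl, rfl⟩
      · left; rfl
      · right; rfl
    · have hadj : (T.deleteEdges {s(a, b)}).Adj v w := by
        rw [SimpleGraph.deleteEdges_adj]; exact ⟨h, he⟩
      exact ih.imp hadj.reachable.trans hadj.reachable.trans

theorem not_reach {V : Type} {T : SimpleGraph V} (hT : T.IsTree) {a b : V} (h : T.Adj a b) :
    ¬ (T.deleteEdges {s(a, b)}).Reachable a b := by
  have := SimpleGraph.isAcyclic_iff_forall_adj_isBridge.1 hT.isAcyclic h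
  rwa [SimpleGraph.isBridge_iff] at this

theorem side_step {V : Type} {T : SimpleGraph V} (hT : T.IsTree) {a b c x : V}
    (hca : T.Adj c a) (hcb : c ≠ b) (h : (T.deleteEdges {s(c, a)}).Reachable x c) :
    (T.deleteEdges {s(a, b)}).Reachable x a := by
  have hn := not_reach hT hca
  obtain ⟨p⟩ := h
  suffices ∀ x z (p : (T.deleteEdges {s(c, a)}).Walk x z), z = c →
    (T.deleteEdges {s(a, b)}).Reachable x a from this x c p rfl
  clear p x
  intro x z p hz
  induction p with
  | nil =>
    subst hz
    apply SimpleGraph.Adj.reachable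
    rw [SimpleGraph.deleteEdges_adj]
    refine ⟨hca, ?_⟩
    simp only [Set.mem_singleton_iff, Sym2.eq_iff]
    rintro (⟨h1, -⟩ | ⟨h1, -⟩)
    · exact hca.ne h1
    · exact hcb h1
  | @cons x y z hxy p ih =>
    refine SimpleGraph.Reachable.trans ?_ (ih hz)
    subst hz
    have hy : (T.deleteEdges {s(z, a)}).Reachable y z := ⟨p⟩
    have hx : (T.deleteEdges {s(z, a)}).Reachable x z := hxy.reachable.trans hy
    have hxa : x ≠ a := by rintro rfl; exact hn hx.symm
    have hya : y ≠ a := by rintro rfl; exact hn hy.symm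
    apply SimpleGraph.Adj.reachable
    rw [SimpleGraph.deleteEdges_adj] at hxy ⊢
    refine ⟨hxy.1, ?_⟩
    simp only [Set.mem_singleton_iff, Sym2.eq_iff]
    rintro (⟨h1, -⟩ | ⟨-, h1⟩)
    · exact hxa h1
    · exact hya h1

theorem reach_iff_of_cut {V : Type} {T : SimpleGraph V} (hT : T.Connected) {a b : V} {W : Set V}
    (ha : a ∈ W) (hb : b ∉ W)
    (hW : ∀ c d, T.Adj c d → c ∈ W → d ∉ W → s(c, d) = s(a, b)) (v : V) :
    (T.deleteEdges {s(a, b)}).Reachable v a ↔ v ∈ W := by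
  have key : ∀ v w, (T.deleteEdges {s(a, b)}).Reachable v w → (v ∈ W ↔ w ∈ W) := by
    rintro v w ⟨p⟩
    induction p with
    | nil => rfl
    | @cons x y z h p ih =>
      rw [← ih]
      rw [SimpleGraph.deleteEdges_adj] at h
      have h1 := hW x y h.1
      have h2 := hW y x h.1.symm
      rw [Sym2.eq_swap] at h2
      have h3 : s(x, y) ≠ s(a, b) := h.2
      tauto
  constructor
  · intro h; exact (key _ _ h).2 ha
  · intro h
    rcases reach_or hT v a b with h1 | h1
    · exact h1
    · exact absurd ((key _ _ h1).1 h) hb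

def joinG {V₁ V₂ : Type} (T₁ : SimpleGraph V₁) (T₂ : SimpleGraph V₂) (r₁ : V₁) (r₂ : V₂) :
    SimpleGraph (V₁ ⊕ V₂) where
  Adj
    | Sum.inl a, Sum.inl b => T₁.Adj a b
    | Sum.inr a, Sum.inr b => T₂.Adj a b
    | Sum.inl a, Sum.inr b => a = r₁ ∧ b = r₂
    | Sum.inr b, Sum.inl a => a = r₁ ∧ b = r₂
  symm := ⟨by
    rintro (a | a) (b | b) h
    · exact T₁.symm.symm _ _ h
    · exact h
    · exact h
    · exact T₂.symm.symm _ _ h⟩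
  loopless := ⟨by
    rintro (a | a) h
    · exact T₁.irrefl h
    · exact T₂.irrefl h⟩

open Classical in
noncomputable def dg {V : Type} (T : SimpleGraph V) (r : V) (s : ℕ) (v : V) : ℕ :=
  (T.neighborSet v).ncard + if v = r then s else 0

theorem dg_inl {V₁ V₂ : Type} [Finite V₁] (T₁ : SimpleGraph V₁) (T₂ : SimpleGraph V₂)
    (r₁ : V₁) (r₂ : V₂) (s : ℕ) (v : V₁) :
    dg (joinG T₁ T₂ r₁ r₂) (Sum.inr r₂) s (Sum.inl v) = dg T₁ r₁ 1 v := by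
  classical
  simp only [dg, reduceCtorEq, if_false, add_zero]
  by_cases h : v = r₁
  · subst h
    have : (joinG T₁ T₂ v r₂).neighborSet (Sum.inl v)
        = insert (Sum.inr r₂) (Sum.inl '' (T₁.neighborSet v)) := by
      ext (w | w) <;> simp [joinG]
    rw [this, Set.ncard_insert_of_notMem (by simp) (Set.toFinite _),
      Set.ncard_image_of_injective _ Sum.inl_injective]
    simp
  · have : (joinG T₁ T₂ r₁ r₂).neighborSet (Sum.inl v) = (Sum.inl '' (T₁.neighborSet v)) := by
      ext (w | w) <;> simp [joinG, h]
    rw [this, Set.ncard_image_of_injective _ Sum.inl_injective]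
    simp [h]

theorem dg_inr {V₁ V₂ : Type} [Finite V₂] (T₁ : SimpleGraph V₁) (T₂ : SimpleGraph V₂)
    (r₁ : V₁) (r₂ : V₂) (s : ℕ) (v : V₂) :
    dg (joinG T₁ T₂ r₁ r₂) (Sum.inr r₂) s (Sum.inr v) = dg T₂ r₂ (s + 1) v := by
  classical
  simp only [dg]
  by_cases h : v = r₂
  · subst h
    have : (joinG T₁ T₂ r₁ v).neighborSet (Sum.inr v)
        = insert (Sum.inl r₁) (Sum.inr '' (T₂.neighborSet v)) := by
      ext (w | w) <;> simp [joinG]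
    rw [this, Set.ncard_insert_of_notMem (by simp) (Set.toFinite _),
      Set.ncard_image_of_injective _ Sum.inr_injective]
    simp; omega
  · have : (joinG T₁ T₂ r₁ r₂).neighborSet (Sum.inr v) = (Sum.inr '' (T₂.neighborSet v)) := by
      ext (w | w) <;> simp [joinG, h]
    rw [this, Set.ncard_image_of_injective _ Sum.inr_injective]
    simp [h]

def Rooted {α : Type} (F : Set α → Prop) (S : Set α) (s : ℕ) : Prop :=
  ∃ (V : Type) (_ : Fintype V) (T : SimpleGraph V) (r : V) (L : α → V), T.Connected ∧
    (∀ v, dg T r s v = 1 ∨ dg T r s v = 3) ∧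
    (∀ x ∈ S, dg T r s (L x) = 1) ∧
    (∀ x ∈ S, ∀ y ∈ S, L x = L y → x = y) ∧
    (∀ v, dg T r s v = 1 → ∃ x ∈ S, L x = v) ∧
    ∀ a b, T.Adj a b → ∃ W : Set V, r ∉ W ∧ (a ∈ W ↔ b ∉ W) ∧
      (∀ c d, T.Adj c d → c ∈ W → d ∉ W → s(c, d) = s(a, b)) ∧ F {x | x ∈ S ∧ L x ∈ W}

theorem Rooted.unit {α : Type} (F : Set α → Prop) (S : Set α) (s : ℕ)
    (h : (s = 1 ∧ ∃ x, S = {x}) ∨ (s = 3 ∧ S = ∅)) : Rooted F S s := by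
  have hd : dg (⊥ : SimpleGraph Unit) () s () = s := by simp [dg]
  refine ⟨Unit, inferInstance, ⊥, (), fun _ => (), ?_, ?_, ?_, ?_, ?_, ?_⟩
  · exact SimpleGraph.IsTree.of_subsingleton.connected
  · intro v; rw [hd]; rcases h with h | h <;> simp [h.1]
  · intro x hx; rw [hd]
    rcases h with h | h
    · exact h.1
    · simp [h.2] at hx
  · intro x hx y hy _
    rcases h with ⟨-, z, rfl⟩ | ⟨-, rfl⟩
    · simp at hx hy; rw [hx, hy]
    · simp at hx
  · intro v hv
    rw [hd] at hv
    rcases h with ⟨-, z, rfl⟩ | ⟨h, rfl⟩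
    · exact ⟨z, rfl, rfl⟩
    · omega
  · intro a b h; simp at h

theorem Rooted.join {α : Type} {F : Set α → Prop} {S₁ S₂ : Set α} {s : ℕ}
    (h₁ : Rooted F S₁ 1) (hF : F S₁) (h₂ : Rooted F S₂ (s + 1)) (hd : Disjoint S₁ S₂) :
    Rooted F (S₁ ∪ S₂) s := by
  classical
  obtain ⟨V₁, _, T₁, r₁, L₁, hc₁, hd₁, hL₁, hi₁, hs₁, hw₁⟩ := h₁
  obtain ⟨V₂, _, T₂, r₂, L₂, hc₂, hd₂, hL₂, hi₂, hs₂, hw₂⟩ := h₂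
  have hd' : ∀ x, x ∈ S₁ → x ∈ S₂ → False := fun x h h' => Set.disjoint_left.1 hd h h'
  let L : α → V₁ ⊕ V₂ := fun x => if x ∈ S₁ then Sum.inl (L₁ x) else Sum.inr (L₂ x)
  have hLl : ∀ x ∈ S₁, L x = Sum.inl (L₁ x) := fun x hx => by simp [L, hx]
  have hLr : ∀ x ∈ S₂, L x = Sum.inr (L₂ x) := fun x hx => by
    have : x ∉ S₁ := fun h => hd' x h hx
    simp [L, this]
  have hl : ∀ x y, T₁.Reachable x y → (joinG T₁ T₂ r₁ r₂).Reachable (Sum.inl x) (Sum.inl y) := by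
    intro x y h
    exact h.map (⟨Sum.inl, fun h => h⟩ : T₁ →g joinG T₁ T₂ r₁ r₂)
  have hr : ∀ x y, T₂.Reachable x y → (joinG T₁ T₂ r₁ r₂).Reachable (Sum.inr x) (Sum.inr y) := by
    intro x y h
    exact h.map (⟨Sum.inr, fun h => h⟩ : T₂ →g joinG T₁ T₂ r₁ r₂)
  have hmid : (joinG T₁ T₂ r₁ r₂).Adj (Sum.inl r₁) (Sum.inr r₂) := ⟨rfl, rfl⟩
  refine ⟨V₁ ⊕ V₂, inferInstance, joinG T₁ T₂ r₁ r₂, Sum.inr r₂, L, ?_, ?_, ?_, ?_, ?_, ?_⟩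
  · rw [SimpleGraph.connected_iff_exists_forall_reachable]
    refine ⟨Sum.inr r₂, ?_⟩
    rintro (x | x)
    · exact hmid.symm.reachable.trans (hl _ _ (hc₁.preconnected _ _))
    · exact hr _ _ (hc₂.preconnected _ _)
  · rintro (v | v)
    · rw [dg_inl]; exact hd₁ v
    · rw [dg_inr]; exact hd₂ v
  · rintro x (hx | hx)
    · rw [hLl x hx, dg_inl]; exact hL₁ x hx
    · rw [hLr x hx, dg_inr]; exact hL₂ x hx
  · rintro x (hx | hx) y (hy | hy) hxy
    · rw [hLl x hx, hLl y hy] at hxy; exact hi₁ x hx y hy (Sum.inl_injective hxy)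
    · rw [hLl x hx, hLr y hy] at hxy; cases hxy
    · rw [hLr x hx, hLl y hy] at hxy; cases hxy
    · rw [hLr x hx, hLr y hy] at hxy; exact hi₂ x hx y hy (Sum.inr_injective hxy)
  · rintro (v | v) hv
    · rw [dg_inl] at hv
      obtain ⟨x, hx, rfl⟩ := hs₁ v hv
      exact ⟨x, Or.inl hx, hLl x hx⟩
    · rw [dg_inr] at hv
      obtain ⟨x, hx, rfl⟩ := hs₂ v hv
      exact ⟨x, Or.inr hx, hLr x hx⟩
  · have mid : ∃ W : Set (V₁ ⊕ V₂), Sum.inr r₂ ∉ W ∧ (Sum.inl r₁ ∈ W) ∧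
      (∀ c d, (joinG T₁ T₂ r₁ r₂).Adj c d → c ∈ W → d ∉ W → s(c, d) = s(Sum.inl r₁, Sum.inr r₂)) ∧
      F {x | x ∈ S₁ ∪ S₂ ∧ L x ∈ W} := by
      refine ⟨Set.range Sum.inl, by simp, by simp, ?_, ?_⟩
      · rintro (c | c) (d | d) h hc hd
        · simp at hd
        · obtain ⟨rfl, rfl⟩ := h; rfl
        · simp at hc
        · simp at hc
      · convert hF using 1
        ext x
        constructor
        · rintro ⟨hx | hx, h⟩
          · exact hx
          · rw [hLr x hx] at h; simp at h
        · intro hx; exact ⟨Or.inl hx, by rw [hLl x hx]; simp⟩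
    rintro (a | a) (b | b) hab
    · obtain ⟨W, h1, h2, h3, h4⟩ := hw₁ a b hab
      refine ⟨Sum.inl '' W, by simp, by simpa using h2, ?_, ?_⟩
      · rintro (c | c) (d | d) h hc hd
        · have := h3 c d h (by simpa using hc) (by simpa using hd)
          simpa using congrArg (Sym2.map (Sum.inl : V₁ → V₁ ⊕ V₂)) this
        · obtain ⟨rfl, rfl⟩ := h
          simp at hc; exact absurd hc h1
        · simp at hc
        · simp at hc
      · convert h4 using 1
        ext x
        constructor
        · rintro ⟨hx | hx, h⟩
          · rw [hLl x hx] at h; exact ⟨hx, by simpa using h⟩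
          · rw [hLr x hx] at h; simp at h
        · rintro ⟨hx, h⟩; exact ⟨Or.inl hx, by rw [hLl x hx]; simpa using h⟩
    · obtain ⟨rfl, rfl⟩ := hab
      obtain ⟨W, h1, h2, h3, h4⟩ := mid
      exact ⟨W, h1, by simp [h1, h2], h3, h4⟩
    · obtain ⟨rfl, rfl⟩ := hab
      obtain ⟨W, h1, h2, h3, h4⟩ := mid
      exact ⟨W, h1, by simp [h1, h2], by rw [Sym2.eq_swap]; exact h3, h4⟩
    · obtain ⟨W, h1, h2, h3, h4⟩ := hw₂ a b hab
      refine ⟨Sum.inr '' W, by simpa using h1, by simpa using h2, ?_, ?_⟩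
      · rintro (c | c) (d | d) h hc hd
        · simp at hc
        · simp at hc
        · obtain ⟨rfl, rfl⟩ := h
          simp at hc; exact absurd hc h1
        · have := h3 c d h (by simpa using hc) (by simpa using hd)
          simpa using congrArg (Sym2.map (Sum.inr : V₂ → V₁ ⊕ V₂)) this
      · convert h4 using 1
        ext x
        constructor
        · rintro ⟨hx | hx, h⟩
          · rw [hLl x hx] at h; simp at h
          · rw [hLr x hx] at h; exact ⟨hx, by simpa using h⟩
        · rintro ⟨hx, h⟩; exact ⟨Or.inr hx, by rw [hLr x hx]; simpa using h⟩

inductive BT {α : Type} (F : Set α → Prop) : Set α → Prop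
  | leaf (x : α) : F {x} → BT F {x}
  | node (S R : Set α) : BT F S → BT F R → Disjoint S R → F (S ∪ R) → BT F (S ∪ R)

theorem BT.rooted {α : Type} {F : Set α → Prop} {S : Set α} (h : BT F S) :
    F S ∧ Rooted F S 1 := by
  induction h with
  | leaf x hx => exact ⟨hx, Rooted.unit _ _ _ (Or.inl ⟨rfl, x, rfl⟩)⟩
  | node S R _ _ hd hF ihS ihR =>
    refine ⟨hF, Rooted.join ihS.2 ihS.1 (?_ : Rooted F R 2) hd⟩
    have := Rooted.join (s := 2) ihR.2 ihR.1 (Rooted.unit F ∅ 3 (Or.inr ⟨rfl, rfl⟩)) (by simp)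
    simpa using this

theorem BT.dec {α : Type} [Fintype α] {G : SimpleGraph α} {k : ℕ} (hα : Nontrivial α)
    (h : BT (fun S => ∃ C : Finset α, C.card ≤ k ∧ IsCov G S C) Set.univ) :
    ∃ (V : Type) (_ : Fintype V) (T : SimpleGraph V), T.IsTree ∧
    (∀ v : V, (T.neighborSet v).ncard = 1 ∨ (T.neighborSet v).ncard = 3) ∧
    ∃ L : α ≃ {v : V // (T.neighborSet v).ncard = 1},
      ∀ a b : V, T.Adj a b →
        mm G {x : α | (T.deleteEdges {s(a, b)}).Reachable (L x : V) a} ≤ k := by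
  classical
  have hR : Rooted (fun S => ∃ C : Finset α, C.card ≤ k ∧ IsCov G S C) Set.univ 0 := by
    generalize hu : (Set.univ : Set α) = U at h
    cases h with
    | leaf x hx =>
      exfalso
      obtain ⟨y, hy⟩ := exists_ne x
      have : y ∈ (Set.univ : Set α) := trivial
      rw [hu] at this
      exact hy this
    | node S R hS hR hd hF => exact Rooted.join hS.rooted.2 hS.rooted.1 hR.rooted.2 hd
  obtain ⟨V, hV, T, r, L, hc, hd, hL, hi, hs, hw⟩ := hR
  simp only [dg, ite_self, add_zero] at hd hL hs
  have htree : T.IsTree := by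
    refine ⟨hc, ?_⟩
    rw [SimpleGraph.isAcyclic_iff_forall_adj_isBridge]
    intro a b hab
    rw [SimpleGraph.isBridge_iff]
    obtain ⟨W, h1, h2, h3, h4⟩ := hw a b hab
    by_cases ha : a ∈ W
    · have hb := h2.1 ha
      intro h
      exact hb ((reach_iff_of_cut hc ha hb h3 b).1 h.symm)
    · have hb : b ∈ W := by tauto
      intro h
      rw [Sym2.eq_swap] at h
      rw [Sym2.eq_swap] at h3
      exact ha ((reach_iff_of_cut hc hb ha h3 a).1 h)
  refine ⟨V, hV, T, htree, hd, ?_⟩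
  let L' : α → {v : V // (T.neighborSet v).ncard = 1} := fun x => ⟨L x, hL x trivial⟩
  have hb : Function.Bijective L' := by
    constructor
    · intro x y hxy
      exact hi x trivial y trivial (congrArg Subtype.val hxy)
    · rintro ⟨v, hv⟩
      obtain ⟨x, -, rfl⟩ := hs v hv
      exact ⟨x, rfl⟩
  refine ⟨Equiv.ofBijective L' hb, ?_⟩
  intro a b hab
  have hLL : ∀ x, ((Equiv.ofBijective L' hb) x : V) = L x := fun x => rfl
  simp only [hLL]
  obtain ⟨W, h1, h2, h3, C, hCk, hC⟩ := hw a b hab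
  have hset : {x | x ∈ Set.univ ∧ L x ∈ W} = {x | L x ∈ W} := by ext; simp
  rw [hset] at hC
  refine le_trans (mm_le_of_cov (C := C) ?_) hCk
  by_cases ha : a ∈ W
  · have hb := h2.1 ha
    simp only [reach_iff_of_cut hc ha hb h3]
    exact hC
  · have hb : b ∈ W := by tauto
    have h3' : ∀ c d, T.Adj c d → c ∈ Wᶜ → d ∉ Wᶜ → s(c, d) = s(a, b) := by
      intro c d hcd h5 h6
      rw [Sym2.eq_swap]
      exact h3 d c hcd.symm (by simpa using h6) h5
    simp only [reach_iff_of_cut (W := Wᶜ) hc ha (by simpa using hb) h3']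
    exact hC.compl

def PB {α : Type} (F : Set α → Prop) (S : Set α) : Prop := S = ∅ ∨ BT F S

theorem PB.union {α : Type} {F : Set α → Prop} {S R : Set α} (hS : PB F S) (hR : PB F R)
    (hd : Disjoint S R) (hF : F (S ∪ R)) : PB F (S ∪ R) := by
  rcases hS with rfl | hS
  · simpa using hR
  · rcases hR with rfl | hR
    · rw [Set.union_empty]; exact Or.inr hS
    · exact Or.inr (BT.node S R hS hR hd hF)

theorem PB.add {α : Type} [Finite α] {F : Set α → Prop} {S W : Set α} (hS : PB F S)
    (hd : Disjoint S W) (hF : ∀ W' ⊆ W, F (S ∪ W')) (h1 : ∀ x, F {x}) : PB F (S ∪ W) := by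
  induction W, Set.toFinite W using Set.Finite.induction_on with
  | empty => simpa using hS
  | @insert a W ha _ ih =>
    have h2 := ih (hd.mono_right (Set.subset_insert _ _))
      (fun W' h => hF W' (h.trans (Set.subset_insert _ _)))
    have h3 : S ∪ insert a W = (S ∪ W) ∪ {a} := by
      rw [Set.union_insert, Set.union_singleton]
    rw [h3]
    refine PB.union h2 (Or.inr (BT.leaf a (h1 a))) ?_ ?_
    · rw [Set.disjoint_singleton_right]
      rintro (h | h)
      · exact Set.disjoint_left.1 hd h (Set.mem_insert _ _)
      · exact ha h
    · rw [← h3]; exact hF _ subset_rfl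

theorem bt_of_rep {α : Type} [Fintype α] [Nonempty α] {G : SimpleGraph α} {k : ℕ}
    {V : Type} [Fintype V] {T : SimpleGraph V} (hT : T.IsTree)
    (hdeg : ∀ v : V, (T.neighborSet v).ncard = 1 ∨ (T.neighborSet v).ncard = 3)
    (f : α → T.Subgraph) (hconn : ∀ u : α, (f u).Connected)
    (hne : ∀ u : α, (f u).edgeSet.Nonempty)
    (hint : ∀ u v : α, G.Adj u v → ((f u).verts ∩ (f v).verts).Nonempty)
    (hk : ∀ e ∈ T.edgeSet, {u : α | e ∈ (f u).edgeSet}.ncard ≤ k) :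
    BT (fun S => ∃ C : Finset α, C.card ≤ k ∧ IsCov G S C) Set.univ := by
  classical
  set F : Set α → Prop := (fun S => ∃ C : Finset α, C.card ≤ k ∧ IsCov G S C) with hFdef
  choose e he using hne
  have heT : ∀ u, e u ∈ T.edgeSet := fun u => (f u).edgeSet_subset (he u)
  have hev : ∀ u w, w ∈ e u → w ∈ (f u).verts := fun u w hw =>
    SimpleGraph.Subgraph.mem_verts_of_mem_edge (he u) hw
  have hconn' : ∀ u a b w w', s(a, b) ∉ (f u).edgeSet → w ∈ (f u).verts → w' ∈ (f u).verts →
      (T.deleteEdges {s(a, b)}).Reachable w w' := by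
    intro u a b w w' hab hw hw'
    have h1 := (hconn u).coe.preconnected ⟨w, hw⟩ ⟨w', hw'⟩
    refine h1.map (⟨Subtype.val, ?_⟩ : (f u).coe →g T.deleteEdges {s(a, b)})
    intro x y hxy
    rw [SimpleGraph.deleteEdges_adj]
    refine ⟨(f u).adj_sub hxy, ?_⟩
    intro h
    apply hab
    rw [Set.mem_singleton_iff] at h
    rw [← h]
    exact hxy
  let sd : V → V → Set V := fun a b => {w | (T.deleteEdges {s(a, b)}).Reachable w a}
  let Um : V → V → Set α := fun a b => {u | ∀ w ∈ e u, w ∈ sd a b}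
  let E : V → V → Set α := fun a b => {u | e u = s(a, b)}
  have hsda : ∀ a b, a ∈ sd a b := fun a b => SimpleGraph.Reachable.refl _
  have hsdb : ∀ a b, T.Adj a b → b ∉ sd a b := fun a b h h' => not_reach hT h h'.symm
  have hstep : ∀ a b c, T.Adj c a → c ≠ b → sd c a ⊆ sd a b :=
    fun a b c hca hcb x hx => side_step hT hca hcb hx
  have hdisj : ∀ a b w, T.Adj a b → w ∈ sd a b → w ∈ sd b a → False := by
    intro a b w hab h1 h2
    have h2' : (T.deleteEdges {s(b, a)}).Reachable w b := h2
    rw [Sym2.eq_swap] at h2'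
    exact not_reach hT hab (SimpleGraph.Reachable.trans (SimpleGraph.Reachable.symm h1) h2')
  have hedge : ∀ a b p q, T.Adj p q → s(p, q) ≠ s(a, b) → p ∈ sd a b → q ∈ sd a b := by
    intro a b p q hpq hne hp
    refine SimpleGraph.Reachable.trans (SimpleGraph.Adj.reachable ?_) hp
    rw [SimpleGraph.deleteEdges_adj]
    refine ⟨hpq.symm, ?_⟩
    rw [Sym2.eq_swap (a := q)]; exact hne
  have hUE : ∀ a b, T.Adj a b → Disjoint (Um a b) (E a b) := by
    intro a b hab
    rw [Set.disjoint_left]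
    intro u hu hu'
    have hu'' : e u = s(a, b) := hu'
    exact hsdb a b hab (hu b (by rw [hu'']; simp))
  have hk1 : 1 ≤ k := by
    obtain ⟨u⟩ := ‹Nonempty α›
    refine le_trans ?_ (hk (e u) (heT u))
    exact (Set.ncard_pos (Set.toFinite _)).2 ⟨u, he u⟩
  have hF1 : ∀ x, F {x} := by
    intro x
    refine ⟨{x}, by simpa using hk1, ?_⟩
    intro a b _ ha _
    left; simpa using ha
  have hFcut : ∀ a b, T.Adj a b → ∀ W ⊆ E a b, F (Um a b ∪ W) := by
    intro a b hab W hW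
    refine ⟨{u : α | s(a, b) ∈ (f u).edgeSet}.toFinset, ?_, ?_⟩
    · rw [← Set.ncard_eq_toFinset_card']
      exact hk _ hab
    · intro x y hxy hx hy
      simp only [Set.mem_toFinset, Set.mem_ofPred_eq]
      by_contra hcon
      push Not at hcon
      obtain ⟨hcx, hcy⟩ := hcon
      have hxU : x ∈ Um a b := by
        rcases hx with hx | hx
        · exact hx
        · exfalso
          have h1 : e x = s(a, b) := hW hx
          exact hcx (h1 ▸ he x)
      apply hy
      left
      obtain ⟨w, hwx, hwy⟩ := hint x y hxy
      have h1 : ∃ z, z ∈ e x := ⟨(e x).out.1, Sym2.out_fst_mem _⟩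
      obtain ⟨z, hz⟩ := h1
      have hw : w ∈ sd a b := SimpleGraph.Reachable.trans
        (hconn' x a b w z hcx hwx (hev x z hz)) (hxU z hz)
      intro z' hz'
      exact SimpleGraph.Reachable.trans (hconn' y a b z' w hcy (hev y z' hz') hwy) hw
  have hmain : ∀ n : ℕ, ∀ a b, T.Adj a b → (sd a b).ncard ≤ n → PB F (Um a b) := by
    intro n
    induction n with
    | zero =>
      intro a b hab h
      exfalso
      rw [Nat.le_zero, Set.ncard_eq_zero (Set.toFinite _)] at h
      exact (h ▸ hsda a b : a ∈ (∅ : Set V))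
    | succ n ih =>
      intro a b hab hn
      have hfull : ∀ c, T.Adj c a → c ≠ b → PB F (Um c a ∪ E c a) := by
        intro c hca hcb
        refine PB.add (ih c a hca ?_) (hUE c a hca) (hFcut c a hca) hF1
        have : sd c a ⊂ sd a b := by
          refine ⟨hstep a b c hca hcb, fun h => ?_⟩
          exact hsdb c a hca (h (hsda a b))
        have := Set.ncard_lt_ncard this (Set.toFinite _)
        omega
      have hsub : ∀ c, T.Adj c a → c ≠ b → Um c a ∪ E c a ⊆ Um a b := by
        rintro c hca hcb u (hu | hu) w hw
        · exact hstep a b c hca hcb (hu w hw)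
        · have hu' : e u = s(c, a) := hu
          rw [hu', Sym2.mem_iff] at hw
          rcases hw with rfl | rfl
          · exact hstep a b w hca hcb (hsda _ _)
          · exact hsda _ _
      have hcover : ∀ u ∈ Um a b, ∃ c, T.Adj c a ∧ c ≠ b ∧ u ∈ Um c a ∪ E c a := by
        intro u hu
        by_cases hau : a ∈ e u
        · obtain ⟨c, hc⟩ := Sym2.mem_iff_exists.1 hau
          have hadj : T.Adj a c := by have := heT u; rw [hc] at this; exact this
          refine ⟨c, hadj.symm, ?_, Or.inr ?_⟩
          · rintro rfl
            exact hsdb a c hab (hu c (by rw [hc]; simp))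
          · show e u = s(c, a)
            rw [hc, Sym2.eq_swap]
        · -- pick an endpoint
          have key : ∀ p z (q : (T.deleteEdges {s(a, b)}).Walk p z), z = a → p ≠ a →
              ∃ c, T.Adj c a ∧ c ≠ b ∧ p ∈ sd c a := by
            intro p z q hz hp
            induction q with
            | nil => exact absurd hz hp
            | @cons p y z hpy q ih =>
              by_cases hy : y = a
              · subst hy
                rw [SimpleGraph.deleteEdges_adj] at hpy
                refine ⟨p, hpy.1, ?_, hsda _ _⟩
                rintro rfl
                exact hpy.2 Sym2.eq_swap
              · obtain ⟨c, hc, hcb, hyc⟩ := ih hz hy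
                rw [SimpleGraph.deleteEdges_adj] at hpy
                refine ⟨c, hc, hcb, hedge c a y p hpy.1.symm ?_ hyc⟩
                intro h
                have : a ∈ s(y, p) := by rw [h]; simp
                rw [Sym2.mem_iff] at this
                rcases this with h | h
                · exact hy h.symm
                · exact hp h.symm
          obtain ⟨p, hp⟩ : ∃ z, z ∈ e u := ⟨(e u).out.1, Sym2.out_fst_mem _⟩
          obtain ⟨q, hq⟩ := Sym2.mem_iff_exists.1 hp
          have hadj : T.Adj p q := by have := heT u; rw [hq] at this; exact this
          obtain ⟨wk⟩ := hu p hp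
          obtain ⟨c, hc, hcb, hpc⟩ := key p a wk rfl (by rintro rfl; exact hau hp)
          refine ⟨c, hc, hcb, Or.inl ?_⟩
          intro w hw
          rw [hq, Sym2.mem_iff] at hw
          rcases hw with rfl | rfl
          · exact hpc
          · refine hedge c a p w hadj ?_ hpc
            intro h
            apply hau
            rw [hq, h]; simp
      have hdis : ∀ c d, T.Adj c a → T.Adj d a → c ≠ d → Disjoint (Um c a ∪ E c a) (Um d a ∪ E d a) := by
        intro c d hca hda hcd
        rw [Set.disjoint_left]
        have hno : ∀ w, w ∈ sd c a → w ∈ sd d a → False := fun w h1 h2 =>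
          hdisj a d w hda.symm (hstep a d c hca hcd h1) h2
        rintro u (hu | hu) (hu' | hu')
        · exact hno _ (hu _ (Sym2.out_fst_mem _)) (hu' _ (Sym2.out_fst_mem _))
        · have h : e u = s(d, a) := hu'
          exact hsdb c a hca (hu a (by rw [h]; simp))
        · have h : e u = s(c, a) := hu
          exact hsdb d a hda (hu' a (by rw [h]; simp))
        · have h : e u = s(c, a) := hu
          have h' : e u = s(d, a) := hu'
          rw [h, Sym2.eq_iff] at h'
          rcases h' with h' | h'
          · exact hcd h'.1
          · exact hca.ne h'.1
      rcases hdeg a with h1 | h3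
      · left
        obtain ⟨z, hz⟩ := Set.ncard_eq_one.1 h1
        have hb : b ∈ T.neighborSet a := hab
        rw [hz] at hb
        rw [Set.eq_empty_iff_forall_notMem]
        intro u hu
        obtain ⟨c, hca, hcb, -⟩ := hcover u hu
        have hc : c ∈ T.neighborSet a := hca.symm
        rw [hz] at hc
        exact hcb (hc.trans hb.symm)
      · have h2 : (T.neighborSet a \ {b}).ncard = 2 := by
          rw [Set.ncard_sdiff_singleton_of_mem (show b ∈ T.neighborSet a from hab), h3]
        obtain ⟨c, d, hcd, hN⟩ := Set.ncard_eq_two.1 h2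
        have hc : c ∈ T.neighborSet a \ {b} := by rw [hN]; simp
        have hd : d ∈ T.neighborSet a \ {b} := by rw [hN]; simp
        have hca : T.Adj c a := SimpleGraph.Adj.symm hc.1
        have hda : T.Adj d a := SimpleGraph.Adj.symm hd.1
        have hU : Um a b = (Um c a ∪ E c a) ∪ (Um d a ∪ E d a) := by
          apply subset_antisymm
          · intro u hu
            obtain ⟨c', hca', hcb', hu'⟩ := hcover u hu
            have : c' ∈ T.neighborSet a \ {b} := ⟨hca'.symm, hcb'⟩
            rw [hN] at this
            rcases this with rfl | rfl
            · exact Or.inl hu'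
            · exact Or.inr hu'
          · exact Set.union_subset (hsub c hca hc.2) (hsub d hda hd.2)
        have hFU := hFcut a b hab ∅ (Set.empty_subset _)
        rw [Set.union_empty] at hFU
        rw [hU] at hFU ⊢
        exact PB.union (hfull c hca hc.2) (hfull d hda hd.2) (hdis c d hca hda hcd) hFU
  obtain ⟨u0⟩ := ‹Nonempty α›
  obtain ⟨a, ha⟩ : ∃ z, z ∈ e u0 := ⟨(e u0).out.1, Sym2.out_fst_mem _⟩
  obtain ⟨b, hb⟩ := Sym2.mem_iff_exists.1 ha
  have hab : T.Adj a b := by have := heT u0; rw [hb] at this; exact this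
  have h1 := PB.add (hmain _ a b hab le_rfl) (hUE a b hab) (hFcut a b hab) hF1
  have h2 := hmain _ b a hab.symm le_rfl
  have hun : (Um a b ∪ E a b) ∪ Um b a = Set.univ := by
    rw [Set.eq_univ_iff_forall]
    intro u
    by_cases hu : e u = s(a, b)
    · exact Or.inl (Or.inr hu)
    · obtain ⟨p, hp⟩ : ∃ z, z ∈ e u := ⟨(e u).out.1, Sym2.out_fst_mem _⟩
      obtain ⟨q, hq⟩ := Sym2.mem_iff_exists.1 hp
      have hadj : T.Adj p q := by have := heT u; rw [hq] at this; exact this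
      rcases reach_or hT.connected p a b with h | h
      · left; left
        intro w hw
        rw [hq, Sym2.mem_iff] at hw
        rcases hw with rfl | rfl
        · exact h
        · exact hedge a b p w hadj (by rwa [← hq]) h
      · right
        intro w hw
        rw [hq, Sym2.mem_iff] at hw
        rw [Sym2.eq_swap] at h
        rcases hw with rfl | rfl
        · exact h
        · exact hedge b a p w hadj (by rwa [← hq, Sym2.eq_swap (a := b)]) h
  have h3 : PB F ((Um a b ∪ E a b) ∪ Um b a) := by
    refine PB.union h1 h2 ?_ ?_
    · rw [Set.disjoint_left]
      rintro u (hu | hu) hu'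
      · exact hdisj a b _ hab (hu _ (Sym2.out_fst_mem _)) (hu' _ (Sym2.out_fst_mem _))
      · have h : e u = s(a, b) := hu
        exact hsdb b a hab.symm (hu' a (by rw [h]; simp))
    · rw [hun]
      exact ⟨∅, by simp, fun x y _ _ h => absurd (Set.mem_univ y) h⟩
  rw [hun] at h3
  rcases h3 with h3 | h3
  · exact absurd (h3 ▸ Set.mem_univ u0 : u0 ∈ (∅ : Set α)) (Set.notMem_empty _)
  · exact h3

theorem path_sep {V : Type} {T : SimpleGraph V} {x y : V} (p : T.Walk x y) (hp : p.IsPath)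
    (d : T.Dart) (hd : d ∈ p.darts) :
    (T.deleteEdges {s(d.fst, d.snd)}).Reachable x d.fst ∧
    (T.deleteEdges {s(d.fst, d.snd)}).Reachable y d.snd := by
  induction p with
  | nil => simp at hd
  | @cons x z y h p ih =>
    rw [SimpleGraph.Walk.cons_isPath_iff] at hp
    rw [SimpleGraph.Walk.darts_cons, List.mem_cons] at hd
    rcases hd with rfl | hd
    · refine ⟨SimpleGraph.Reachable.refl _, ?_⟩
      have : s(x, z) ∉ p.edges := fun he => hp.2 (p.fst_mem_support_of_mem_edges he)
      exact SimpleGraph.Reachable.symm (⟨p.toDeleteEdge _ this⟩ : (T.deleteEdges {s(x, z)}).Reachable z y)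
    · obtain ⟨h1, h2⟩ := ih hp.1 hd
      refine ⟨SimpleGraph.Reachable.trans (SimpleGraph.Adj.reachable ?_) h1, h2⟩
      rw [SimpleGraph.deleteEdges_adj]
      refine ⟨h, ?_⟩
      rw [Set.mem_singleton_iff, Sym2.eq_iff]
      rintro (⟨h3, -⟩ | ⟨h3, -⟩)
      · exact hp.2 (h3 ▸ p.dart_fst_mem_support_of_mem_darts hd)
      · exact hp.2 (h3 ▸ p.dart_snd_mem_support_of_mem_darts hd)

theorem walk_meet {V : Type} {T : SimpleGraph V} {A B : Set V} {x y : V} (p : T.Walk x y)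
    (hx : x ∈ A) (hy : y ∈ B)
    (h : ∀ d ∈ p.darts, (d.fst ∈ A ∧ d.snd ∈ A) ∨ (d.fst ∈ B ∧ d.snd ∈ B)) :
    (A ∩ B).Nonempty := by
  induction p with
  | nil => exact ⟨_, hx, hy⟩
  | @cons x z y hxz p ih =>
    rcases h ⟨(x, z), hxz⟩ (by simp) with h1 | h1
    · exact ih h1.2 hy (fun d hd => h d (by simp [hd]))
    · exact ⟨x, hx, h1.1⟩

theorem coe_reach {V : Type} {T : SimpleGraph V} (H : T.Subgraph) {x y : V}
    (h : H.spanningCoe.Reachable x y) (hx : x ∈ H.verts) (hy : y ∈ H.verts) :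
    H.coe.Reachable ⟨x, hx⟩ ⟨y, hy⟩ := by
  obtain ⟨p⟩ := h
  induction p with
  | nil => exact SimpleGraph.Reachable.refl _
  | @cons x z y hxz p ih =>
    have hxz' : H.Adj x z := hxz
    have hz : z ∈ H.verts := H.edge_vert hxz'.symm
    refine SimpleGraph.Reachable.trans (SimpleGraph.Adj.reachable ?_) (ih hz hy)
    exact hxz'

theorem fwd {α : Type} [Fintype α] {G : SimpleGraph α} (hG : G.edgeSet.Nonempty) {k : ℕ}
    {V : Type} [hV : Fintype V] {T : SimpleGraph V} (hT : T.IsTree)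
    (hdeg : ∀ v : V, (T.neighborSet v).ncard = 1 ∨ (T.neighborSet v).ncard = 3)
    (L : α ≃ {v : V // (T.neighborSet v).ncard = 1})
    (hL : ∀ a b : V, T.Adj a b →
        mm G {x : α | (T.deleteEdges {s(a, b)}).Reachable (L x : V) a} ≤ k) :
    ∃ (V : Type) (_ : Fintype V) (T : SimpleGraph V), T.IsTree ∧
        (∀ v : V, (T.neighborSet v).ncard = 1 ∨ (T.neighborSet v).ncard = 3) ∧
        ∃ f : α → T.Subgraph,
          (∀ u : α, (f u).Connected) ∧
          (∀ u : α, (f u).edgeSet.Nonempty) ∧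
          (∀ u v : α, G.Adj u v → ((f u).verts ∩ (f v).verts).Nonempty) ∧
          (∀ e ∈ T.edgeSet, {u : α | e ∈ (f u).edgeSet}.ncard ≤ k) := by
  classical
  let sg : V → V → Set α := fun a b => {x : α | (T.deleteEdges {s(a, b)}).Reachable (L x : V) a}
  have hleaf : ∀ x, ∃ w, T.Adj (L x) w ∧ sg (L x) w = {x} := by
    intro x
    obtain ⟨w, hw⟩ := Set.ncard_eq_one.1 (L x).2
    have hadj : T.Adj (L x) w := by
      have : w ∈ T.neighborSet (L x) := by rw [hw]; rfl
      exact this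
    refine ⟨w, hadj, ?_⟩
    ext y
    rw [Set.mem_singleton_iff]
    constructor
    · intro h
      obtain ⟨p⟩ := SimpleGraph.Reachable.symm h
      by_contra hne
      have hne' : (L x : V) ≠ L y := fun h => hne (L.injective (Subtype.ext h)).symm
      have aux : ∀ a b (p : (T.deleteEdges {s((L x : V), w)}).Walk a b), a = L x → a ≠ b → False := by
        intro a b p ha hab
        cases p with
        | nil => exact hab rfl
        | @cons _ z _ h p =>
          subst ha
          rw [SimpleGraph.deleteEdges_adj] at h
          have hz : z ∈ T.neighborSet (L x) := h.1
          rw [hw] at hz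
          rw [Set.mem_singleton_iff] at hz
          subst hz
          exact h.2 rfl
      exact aux _ _ p rfl hne'
    · rintro rfl
      exact SimpleGraph.Reachable.refl _
  obtain ⟨x1, x2, hx12⟩ : ∃ x y, G.Adj x y := by
    obtain ⟨e, he⟩ := hG
    induction e with | h x y => exact ⟨x, y, he⟩
  have hk1 : 1 ≤ k := by
    obtain ⟨w, hw, hs⟩ := hleaf x1
    have h1 := hL _ _ hw
    change mm G (sg (L x1) w) ≤ k at h1
    rw [hs] at h1
    obtain ⟨C, hC, hCm, -⟩ := exists_best G {x1}
    have h2 := (card_le_mm hC hCm).trans h1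
    refine le_trans ?_ h2
    rw [Nat.one_le_iff_ne_zero, Ne, Finset.card_eq_zero]
    rintro rfl
    have := hC x1 x2 hx12 rfl (by simpa using hx12.ne')
    simp at this
  by_cases hcard : 3 ≤ Fintype.card α
  swap
  · -- star
    have hc3 : Fintype.card α ≤ Fintype.card (Fin 3) := by rw [Fintype.card_fin]; omega
    obtain ⟨i⟩ := Function.Embedding.nonempty_of_card_le hc3
    have hadj : ∀ u, (SimpleGraph.starGraph (none : Option (Fin 3))).Adj none (some (i u)) := by
      intro u; simp
    refine ⟨Option (Fin 3), inferInstance, SimpleGraph.starGraph none,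
      SimpleGraph.isTree_starGraph _, ?_, fun u => SimpleGraph.subgraphOfAdj _ (hadj u),
      ?_, ?_, ?_, ?_⟩
    · rintro (_ | v)
      · right
        have : (SimpleGraph.starGraph (none : Option (Fin 3))).neighborSet none
            = Set.range some := by
          ext (_ | v) <;> simp
        rw [this, ← Set.image_univ, Set.ncard_image_of_injective _ (Option.some_injective _)]
        simp
      · left
        have : (SimpleGraph.starGraph (none : Option (Fin 3))).neighborSet (some v)
            = {none} := by
          ext (_ | v) <;> simp
        rw [this, Set.ncard_singleton]
    · intro u; exact SimpleGraph.Subgraph.subgraphOfAdj_connected _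
    · intro u; simp
    · intro u v _; exact ⟨none, by simp⟩
    · intro e he
      refine le_trans ?_ hk1
      rw [Set.ncard_le_one (Set.toFinite _)]
      intro u hu v hv
      simp only [SimpleGraph.edgeSet_subgraphOfAdj, Set.mem_singleton_iff, Set.mem_ofPred_eq] at hu hv
      rw [hu] at hv
      simp at hv
      exact hv
  obtain ⟨C, hCcov, hCcard, hCcompl, hCleaf, hCmono⟩ := exists_covers' G hcard
  have hsgc : ∀ a b, T.Adj a b → sg b a = (sg a b)ᶜ := by
    intro a b hab
    ext x
    rw [Set.mem_compl_iff]
    change (T.deleteEdges {s(b, a)}).Reachable (L x : V) b ↔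
      ¬ (T.deleteEdges {s(a, b)}).Reachable (L x : V) a
    rw [Sym2.eq_swap]
    constructor
    · intro h1 h2
      exact not_reach hT hab (h2.symm.trans h1)
    · intro h
      exact (reach_or hT.connected (L x : V) a b).resolve_left h
  have hCsym : ∀ a b, T.Adj a b → C (sg b a) = C (sg a b) := by
    intro a b hab; rw [hsgc a b hab, hCcompl]
  let H : α → T.Subgraph := fun u =>
    { verts := {w | ∃ w', T.Adj w w' ∧ u ∈ C (sg w w')}
      Adj := fun a b => T.Adj a b ∧ u ∈ C (sg a b)
      adj_sub := fun h => h.1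
      edge_vert := fun {a b} h => ⟨b, h⟩
      symm := ⟨fun a b h => ⟨h.1.symm, by rw [hCsym a b h.1]; exact h.2⟩⟩ }
  have hHadj : ∀ u a b, (H u).Adj a b ↔ T.Adj a b ∧ u ∈ C (sg a b) := fun _ _ _ => Iff.rfl
  have hLH : ∀ u, ∃ w, (H u).Adj (L u) w := by
    intro u
    obtain ⟨w, hw, hs⟩ := hleaf u
    exact ⟨w, hw, by rw [hs]; exact hCleaf u⟩
  have hLv : ∀ u, (L u : V) ∈ (H u).verts := by
    intro u
    obtain ⟨w, hw⟩ := hLH u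
    exact (H u).edge_vert hw
  have claim : ∀ u a z (p : T.Walk a z), z = L u → ∀ b, T.Adj b a → p.IsPath → b ∉ p.support →
      u ∈ C (sg a b) → (H u).spanningCoe.Reachable b z := by
    intro u a z p hz
    induction p with
    | @nil a =>
      intro b hba _ _ hu
      apply SimpleGraph.Adj.reachable
      exact (show (H u).Adj a b from ⟨hba.symm, hu⟩).symm
    | @cons a c z hac p ih =>
      intro b hba hp hb hu
      rw [SimpleGraph.Walk.cons_isPath_iff] at hp
      rw [SimpleGraph.Walk.support_cons, List.mem_cons, not_or] at hb
      have hcb : c ≠ b := by rintro rfl; exact hb.2 p.start_mem_support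
      have hadj : (H u).spanningCoe.Adj b a :=
        (show (H u).Adj a b from ⟨hba.symm, hu⟩).symm
      have hsub : sg c a ⊆ sg a b := fun x hx => side_step hT hac.symm hcb hx
      have hmem : u ∈ sg c a := by
        have : s(c, a) ∉ p.edges := fun he => hp.2 (p.snd_mem_support_of_mem_edges he)
        have h1 : (T.deleteEdges {s(c, a)}).Reachable c z := ⟨p.toDeleteEdge _ this⟩
        rw [hz] at h1
        exact h1.symm
      exact hadj.reachable.trans (ih hz a hac hp.1 hp.2 (hCmono _ _ u hsub hmem hu))
  have claim2 : ∀ u a b, T.Adj b a → (T.deleteEdges {s(a, b)}).Reachable (L u : V) a →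
      u ∈ C (sg a b) → (H u).spanningCoe.Reachable b (L u : V) := by
    intro u a b hba hr hu
    obtain ⟨p, hp⟩ := hr.symm.exists_isPath
    refine claim u a (L u) (p.mapLe (SimpleGraph.deleteEdges_le _)) rfl b hba
      (hp.mapLe _) ?_ hu
    intro hb
    rw [SimpleGraph.Walk.support_mapLe_eq_support] at hb
    exact not_reach hT hba.symm ⟨p.takeUntil b hb⟩
  refine ⟨V, hV, T, hT, hdeg, H, ?_, ?_, ?_, ?_⟩
  · intro u
    rw [SimpleGraph.Subgraph.connected_iff', SimpleGraph.connected_iff_exists_forall_reachable]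
    refine ⟨⟨L u, hLv u⟩, ?_⟩
    rintro ⟨w, hw⟩
    apply SimpleGraph.Reachable.symm
    apply coe_reach
    obtain ⟨w', hadj, hu⟩ := hw
    rcases reach_or hT.connected (L u : V) w w' with h | h
    · refine SimpleGraph.Reachable.trans (SimpleGraph.Adj.reachable ?_)
        (claim2 u w w' hadj.symm h hu)
      exact (show (H u).Adj w w' from ⟨hadj, hu⟩)
    · rw [Sym2.eq_swap] at h
      exact claim2 u w' w hadj h (by rw [hCsym w w' hadj]; exact hu)
  · intro u
    obtain ⟨w, hw⟩ := hLH u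
    exact ⟨s((L u : V), w), hw⟩
  · intro u v huv
    obtain ⟨p, hp⟩ := (hT.connected.preconnected (L u : V) (L v : V)).exists_isPath
    refine walk_meet p (hLv u) (hLv v) ?_
    intro d hd
    obtain ⟨h1, h2⟩ := path_sep p hp d hd
    have hu : u ∈ sg d.fst d.snd := h1
    have hv : v ∉ sg d.fst d.snd := by
      have : v ∈ sg d.snd d.fst := by
        rw [Sym2.eq_swap] at h2; exact h2
      rw [hsgc _ _ d.adj] at this
      exact this
    refine (hCcov _ u v huv hu hv).imp (fun h => ?_) (fun h => ?_)
    · have := (hHadj u _ _).2 ⟨d.adj, h⟩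
      exact ⟨(H u).edge_vert this, (H u).edge_vert this.symm⟩
    · have := (hHadj v _ _).2 ⟨d.adj, h⟩
      exact ⟨(H v).edge_vert this, (H v).edge_vert this.symm⟩
  · intro e
    induction e with | h a b =>
    intro hab
    have hab' : T.Adj a b := hab
    have hset : {u : α | s(a, b) ∈ (H u).edgeSet} = (C (sg a b) : Set α) := by
      ext u
      exact ⟨fun h => ((hHadj u a b).1 h).2, fun h => (hHadj u a b).2 ⟨hab', h⟩⟩
    rw [hset, Set.ncard_coe_finset]
    exact (hCcard _).trans (max_le hk1 (hL a b hab'))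

/-- A finite simple graph `G` with at least one edge satisfies `mmw G ≤ k` if and only if
there exist a finite ternary tree `T` and nontrivial subtrees `T_u = f u` of `T` for all
`u ∈ V(G)` such that (1) if `uv ∈ E(G)` then `T_u` and `T_v` share at least one vertex of
`T`, and (2) every edge of `T` belongs to at most `k` of the subtrees. -/
theorem mmw_le_iff_tree_representation {α : Type} [Fintype α] (G : SimpleGraph α)
    (hG : G.edgeSet.Nonempty) (k : ℕ) :
    mmw G ≤ k ↔
      ∃ (V : Type) (_ : Fintype V) (T : SimpleGraph V), T.IsTree ∧
        (∀ v : V, (T.neighborSet v).ncard = 1 ∨ (T.neighborSet v).ncard = 3) ∧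
        ∃ f : α → T.Subgraph,
          (∀ u : α, (f u).Connected) ∧
          (∀ u : α, (f u).edgeSet.Nonempty) ∧
          (∀ u v : α, G.Adj u v → ((f u).verts ∩ (f v).verts).Nonempty) ∧
          (∀ e ∈ T.edgeSet, {u : α | e ∈ (f u).edgeSet}.ncard ≤ k) := by
  classical
  obtain ⟨x1, x2, hx12⟩ : ∃ x y, G.Adj x y := by
    obtain ⟨e, he⟩ := hG
    induction e with | h x y => exact ⟨x, y, he⟩
  have hnt : Nontrivial α := ⟨x1, x2, hx12.ne⟩
  constructor
  · intro h
    have hb : BT (fun S => ∃ C : Finset α, C.card ≤ Fintype.card α ∧ IsCov G S C) Set.univ := by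
      have hF : ∀ S : Set α, ∃ C : Finset α, C.card ≤ Fintype.card α ∧ IsCov G S C :=
        fun S => ⟨Finset.univ, le_rfl, fun x y _ _ _ => Or.inl (Finset.mem_univ x)⟩
      have := PB.add (F := fun S => ∃ C : Finset α, C.card ≤ Fintype.card α ∧ IsCov G S C)
        (S := ∅) (W := Set.univ) (Or.inl rfl) (by simp) (fun _ _ => hF _) (fun _ => hF _)
      rw [Set.empty_union] at this
      rcases this with h1 | h1
      · exact absurd (h1 ▸ Set.mem_univ x1 : x1 ∈ (∅ : Set α)) (Set.notMem_empty _)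
      · exact h1
    have hne := Set.nonempty_of_mem (show Fintype.card α ∈ {k : ℕ | ∃ (V : Type) (_ : Fintype V)
      (T : SimpleGraph V), T.IsTree ∧
      (∀ v : V, (T.neighborSet v).ncard = 1 ∨ (T.neighborSet v).ncard = 3) ∧
      ∃ L : α ≃ {v : V // (T.neighborSet v).ncard = 1},
        ∀ a b : V, T.Adj a b →
          mm G {x : α | (T.deleteEdges {s(a, b)}).Reachable (L x : V) a} ≤ k} from hb.dec hnt)
    obtain ⟨V, hV, T, hT, hdeg, L, hL⟩ := Nat.sInf_mem hne
    exact fwd hG hT hdeg L (fun a b hab => (hL a b hab).trans h)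
  · rintro ⟨V, hV, T, hT, hdeg, f, h1, h2, h3, h4⟩
    exact Nat.sInf_le ((bt_of_rep hT hdeg f h1 h2 h3 h4).dec hnt)
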